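/- Let 𝒢 = (G,p,θ,τ) be a well-positioned Γ-symmetric bar-joint framework in X. Then the complex-linear extension df_G(p) : (X_ℂ)^V → ℂ^E maps X_χ into Y_χ for every character χ ∈ Γ̂; consequently, with respect to the direct sum decompositions (X_ℂ)^V = ⊕_{χ∈Γ̂} X_χ and ℂ^E = ⊕_{χ∈Γ̂} Y_χ, the map df_G(p) is the direct sum ⊕_{χ∈Γ̂} R_χ(𝒢) of the restricted linear maps R_χ(𝒢) : X_χ → Y_χ. -/

import Mathlib

/-!
Statement 2 (Proposition 2.4 / prop:block): the complexified differential `df_G(p)`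
maps each character space `X_χ` into `Y_χ`, i.e. it decomposes as the direct sum of
the restricted maps `R_χ(𝒢) : X_χ → Y_χ`.
-/

open scoped TensorProduct

namespace Stmt2

variable {V : Type} [Fintype V] [DecidableEq V]
variable {X : Type} [NormedAddCommGroup X] [NormedSpace ℝ X]
variable {Γ : Type} [CommGroup Γ] [Fintype Γ]

/-- The edge-length (rigidity) map `f_G : X^V → ℝ^E`. -/
noncomputable def fG (G : SimpleGraph V) [Fintype G.edgeSet] (x : V → X) (e : G.edgeSet) : ℝ :=
  Sym2.lift ⟨fun v w => ‖x v - x w‖, fun v w => by simp only []; rw [norm_sub_rev]⟩ e.1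

/-- A framework is well-positioned if `f_G` is differentiable at `p`. -/
noncomputable def WellPositioned (G : SimpleGraph V) [Fintype G.edgeSet] (p : V → X) : Prop :=
  DifferentiableAt ℝ (fG G) p

/-- The (real) differential `df_G(p)`. -/
noncomputable def dfR (G : SimpleGraph V) [Fintype G.edgeSet] (p : V → X) :
    (V → X) →L[ℝ] (G.edgeSet → ℝ) :=
  fderiv ℝ (fG G) p

/-- The functional `φ_{v,w}` (for the edge `e` and endpoint `v`) obtained from the
differential. -/
noncomputable def phiEdge (G : SimpleGraph V) [Fintype G.edgeSet] (p : V → X)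
    (e : G.edgeSet) (v : V) : X →ₗ[ℝ] ℝ :=
  (LinearMap.proj (R := ℝ) (φ := fun _ : G.edgeSet => ℝ) e).comp
    ((dfR G p).toLinearMap.comp (LinearMap.single ℝ (fun _ : V => X) v))

/-- Complexification of a real linear functional to `X_ℂ →ₗ[ℂ] ℂ`. -/
noncomputable def cplxFunctional (f : X →ₗ[ℝ] ℝ) : (ℂ ⊗[ℝ] X) →ₗ[ℂ] ℂ :=
  LinearMap.liftBaseChange ℂ ((Complex.ofRealCLM.toLinearMap).comp f)

/-- The complex-linear extension of `df_G(p)` to `(X_ℂ)^V → ℂ^E`. -/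
noncomputable def dfC (G : SimpleGraph V) [Fintype G.edgeSet] (p : V → X) :
    (V → ℂ ⊗[ℝ] X) →ₗ[ℂ] (G.edgeSet → ℂ) :=
  LinearMap.pi fun e : G.edgeSet =>
    ∑ v : V, (cplxFunctional (phiEdge G p e v)).comp
      (LinearMap.proj (R := ℂ) (φ := fun _ : V => ℂ ⊗[ℝ] X) v)

/-- The induced action of a graph automorphism on the edge set. -/
def edgeAct (G : SimpleGraph V) (θ : Γ →* Equiv.Perm V)
    (hadj : ∀ (γ : Γ) (u v : V), G.Adj u v ↔ G.Adj (θ γ u) (θ γ v))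
    (γ : Γ) (e : G.edgeSet) : G.edgeSet :=
  ⟨Sym2.map (θ γ) e.1, by
    obtain ⟨e, he⟩ := e
    induction e using Sym2.ind with
    | _ u v => simpa using (hadj γ u v).1 (by simpa using he)⟩

/-- Complexification of the isometry `τ γ`. -/
noncomputable def tauC (τ : Γ →* (X ≃ₗᵢ[ℝ] X)) (γ : Γ) :
    (ℂ ⊗[ℝ] X) →ₗ[ℂ] (ℂ ⊗[ℝ] X) :=
  LinearMap.baseChange ℂ ((τ γ).toLinearEquiv.toLinearMap)

/-- The character subspace `X_χ ⊆ (X_ℂ)^V`. -/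
noncomputable def Xchi (θ : Γ →* Equiv.Perm V) (τ : Γ →* (X ≃ₗᵢ[ℝ] X)) (χ : Γ →* ℂ) :
    Submodule ℂ (V → ℂ ⊗[ℝ] X) :=
  ⨅ (γ : Γ), ⨅ (v : V),
    LinearMap.ker
      ((LinearMap.proj (R := ℂ) (φ := fun _ : V => ℂ ⊗[ℝ] X) (θ γ v)) -
        χ γ • ((tauC τ γ).comp (LinearMap.proj (R := ℂ) (φ := fun _ : V => ℂ ⊗[ℝ] X) v)))

/-- The character subspace `Y_χ ⊆ ℂ^E`. -/
noncomputable def Ychi (G : SimpleGraph V) (θ : Γ →* Equiv.Perm V)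
    (hadj : ∀ (γ : Γ) (u v : V), G.Adj u v ↔ G.Adj (θ γ u) (θ γ v)) (χ : Γ →* ℂ) :
    Submodule ℂ (G.edgeSet → ℂ) :=
  ⨅ (γ : Γ), ⨅ (e : G.edgeSet),
    LinearMap.ker
      ((LinearMap.proj (R := ℂ) (φ := fun _ : G.edgeSet => ℂ) (edgeAct G θ hadj γ e)) -
        χ γ • (LinearMap.proj (R := ℂ) (φ := fun _ : G.edgeSet => ℂ) e))

/-- The action of `γ` on placements: `x ↦ (τ γ (x (γ⁻¹ v)))_v`. -/
noncomputable def placementAct (θ : Γ →* Equiv.Perm V) (τ : Γ →* (X ≃ₗᵢ[ℝ] X)) (γ : Γ) :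
    (V → X) →L[ℝ] (V → X) :=
  ContinuousLinearMap.pi fun v =>
    ((τ γ).toContinuousLinearEquiv : X →L[ℝ] X).comp
      (ContinuousLinearMap.proj (R := ℝ) (φ := fun _ : V => X) ((θ γ).symm v))

lemma placementAct_apply (θ : Γ →* Equiv.Perm V) (τ : Γ →* (X ≃ₗᵢ[ℝ] X)) (γ : Γ)
    (x : V → X) (v : V) : placementAct θ τ γ x v = τ γ (x ((θ γ).symm v)) := rfl

lemma placementAct_single (θ : Γ →* Equiv.Perm V) (τ : Γ →* (X ≃ₗᵢ[ℝ] X)) (γ : Γ)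
    (v : V) (x : X) :
    placementAct θ τ γ (Pi.single v x) = Pi.single (θ γ v) (τ γ x) := by
  ext w
  rw [placementAct_apply]
  by_cases h : w = θ γ v
  · subst h
    simp
  · have h' : (θ γ).symm w ≠ v := fun h' => h (by simp [← h'])
    simp [h, h']

lemma fG_placementAct (G : SimpleGraph V) [Fintype G.edgeSet] (θ : Γ →* Equiv.Perm V)
    (hadj : ∀ (γ : Γ) (u v : V), G.Adj u v ↔ G.Adj (θ γ u) (θ γ v))
    (τ : Γ →* (X ≃ₗᵢ[ℝ] X)) (γ : Γ) (x : V → X) (e : G.edgeSet) :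
    fG G (placementAct θ τ γ x) (edgeAct G θ hadj γ e) = fG G x e := by
  obtain ⟨e, he⟩ := e
  induction e using Sym2.ind with
  | _ u v => simp [fG, edgeAct, placementAct_apply, ← map_sub]

lemma dfR_placementAct (G : SimpleGraph V) [Fintype G.edgeSet] (p : V → X)
    (hwp : WellPositioned G p) (θ : Γ →* Equiv.Perm V)
    (hadj : ∀ (γ : Γ) (u v : V), G.Adj u v ↔ G.Adj (θ γ u) (θ γ v))
    (τ : Γ →* (X ≃ₗᵢ[ℝ] X)) (hsymm : ∀ (γ : Γ) (v : V), τ γ (p v) = p (θ γ v))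
    (γ : Γ) (u : V → X) (e : G.edgeSet) :
    dfR G p (placementAct θ τ γ u) (edgeAct G θ hadj γ e) = dfR G p u e := by
  have hp : placementAct θ τ γ p = p := by
    ext v
    simp [placementAct_apply, hsymm]
  have hf : HasFDerivAt (fG G) (dfR G p) p := hwp.hasFDerivAt
  have hf' : HasFDerivAt (fG G) (dfR G p) (placementAct θ τ γ p) := by rwa [hp]
  have hcomp := hasFDerivAt_pi'.1 (hf'.comp p (placementAct θ τ γ).hasFDerivAt)
    (edgeAct G θ hadj γ e)
  have hfun : (fun x => (fG G ∘ placementAct θ τ γ) x (edgeAct G θ hadj γ e)) =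
      fun x => fG G x e := funext fun x => fG_placementAct G θ hadj τ γ x e
  rw [hfun] at hcomp
  exact DFunLike.congr_fun (hcomp.unique (hasFDerivAt_pi'.1 hf e)) u

lemma phiEdge_equivariant (G : SimpleGraph V) [Fintype G.edgeSet] (p : V → X)
    (hwp : WellPositioned G p) (θ : Γ →* Equiv.Perm V)
    (hadj : ∀ (γ : Γ) (u v : V), G.Adj u v ↔ G.Adj (θ γ u) (θ γ v))
    (τ : Γ →* (X ≃ₗᵢ[ℝ] X)) (hsymm : ∀ (γ : Γ) (v : V), τ γ (p v) = p (θ γ v))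
    (γ : Γ) (e : G.edgeSet) (v : V) :
    (phiEdge G p (edgeAct G θ hadj γ e) (θ γ v)).comp (τ γ).toLinearEquiv.toLinearMap =
      phiEdge G p e v := by
  ext x
  have h := dfR_placementAct G p hwp θ hadj τ hsymm γ (Pi.single v x) e
  rw [placementAct_single] at h
  exact h

lemma cplxFunctional_baseChange (f : X →ₗ[ℝ] ℝ) (g : X →ₗ[ℝ] X) (z : ℂ ⊗[ℝ] X) :
    cplxFunctional f (g.baseChange ℂ z) = cplxFunctional (f.comp g) z := by
  induction z using TensorProduct.induction_on with
  | zero => simp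
  | tmul c x => simp [cplxFunctional]
  | add a b ha hb => simp only [map_add, ha, hb]

theorem block_decomposition
    (hd : 2 ≤ Module.finrank ℝ X) [FiniteDimensional ℝ X]
    (G : SimpleGraph V) [Fintype G.edgeSet] (p : V → X)
    (hpinj : Function.Injective p)
    (hwp : WellPositioned G p)
    (θ : Γ →* Equiv.Perm V)
    (hadj : ∀ (γ : Γ) (u v : V), G.Adj u v ↔ G.Adj (θ γ u) (θ γ v))
    (hfree : ∀ γ : Γ, γ ≠ 1 → ∀ v : V, θ γ v ≠ v)
    (τ : Γ →* (X ≃ₗᵢ[ℝ] X))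
    (hsymm : ∀ (γ : Γ) (v : V), τ γ (p v) = p (θ γ v)) :
    ∀ χ : Γ →* ℂ, Submodule.map (dfC G p) (Xchi θ τ χ) ≤ Ychi G θ hadj χ := by
  rintro χ _ ⟨x, hx, rfl⟩
  simp only [Xchi, SetLike.mem_coe, Submodule.mem_iInf, LinearMap.mem_ker, LinearMap.sub_apply,
    LinearMap.smul_apply, LinearMap.comp_apply, LinearMap.proj_apply, sub_eq_zero] at hx
  simp only [Ychi, Submodule.mem_iInf, LinearMap.mem_ker, LinearMap.sub_apply,
    LinearMap.smul_apply, LinearMap.proj_apply, sub_eq_zero]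
  intro γ e
  simp only [dfC, LinearMap.pi_apply, LinearMap.sum_apply, LinearMap.comp_apply,
    LinearMap.proj_apply, Finset.smul_sum]
  rw [← Equiv.sum_comp (θ γ)]
  refine Finset.sum_congr rfl fun v _ => ?_
  rw [hx γ v, map_smul, tauC, cplxFunctional_baseChange,
    phiEdge_equivariant G p hwp θ hadj τ hsymm]

end Stmt2
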